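/- Abstract existence theorem for the dual-mixed Navier–Stokes problem: Let X and 𝕊 be separable reflexive Banach spaces (X playing the role of 𝔾×𝕌), a : X×X → ℝ and b : 𝕊×X → ℝ continuous bilinear forms, Z = {x ∈ X : b(T,x)=0 ∀T ∈ 𝕊}, and c : Z×Z×X → ℝ trilinear and continuous. Assume (i) a(z,z) ≥ c_a‖z‖² for z ∈ Z with c_a > 0; (ii) the inf-sup condition sup_{x∈X} b(S,x)/‖x‖ ≥ c_b‖S‖_𝕊 for all S ∈ 𝕊 with c_b > 0; (iii) c(z,z,z) = 0 for z ∈ Z and z ↦ c(z,z,·) : Z → X' is weakly continuous. Then for each F ∈ X' there exist z ∈ Z and S ∈ 𝕊 with a(z,x) + c(z,z,x) - b(S,x) = F(x) for all x ∈ X, and ‖z‖ ≤ ‖F‖/c_a. -/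

import Mathlib

open Filter

/-!
The first component is found by the Galerkin method on the kernel `Z` of `b`, and the second is
then recovered from the inf-sup condition.

On a finite-dimensional subspace `V ≤ Z` the equation `a z v + c z z v = F v` for all `v ∈ V` asks
for a zero of a smooth vector field. By coercivity of `a` and `c z z z = 0` this field points
outward on a large sphere, so a Brouwer-type theorem (`exists_zero_of_inner_pos`) gives a solution
(`exists_galerkin`); testing with `z` itself gives `‖z‖ ≤ ‖F‖ / ca`. Let `V` run through an
exhaustion of `Z` by spans of a dense sequence. Bounded sequences in a separable reflexive space
have weakly convergent subsequences (`exists_weakly_convergent_subseq`), and the linear terms and,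
by the weak continuity hypothesis, the term `c z z v` pass to the limit. Hence the functional
`a z + c z z - F` vanishes on a dense subset of `Z`, so on `Z`. The range of `b` is closed by the
inf-sup condition, so by Hahn-Banach and reflexivity it is the annihilator of `Z`, and contains
this functional (`exists_eq_of_vanish_on_kernel`).

The Brouwer-type theorem follows from the absence of a `C¹` retraction `r` of a ball onto its
boundary sphere (`no_retraction`), shown by the argument of Milnor and Rogers. For small `t > 0` the
map `x ↦ x + t (r x - x)` is a bijection of the ball with positive Jacobian, so the integral of
`det (1 + t (r' x - 1))` over the ball is the volume of the ball. The integrand is polynomial in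
`t`, so the same value is attained at `t = 1`; but there it is `det (r' x) = 0`, because `‖r‖` is
constant.
-/

/-! ### Determinants of perturbations of the identity -/

/-- The function `t ↦ det (1 + t A)` is a polynomial of degree at most `dim E`, so its value at `1`
is given by Lagrange interpolation from nodes in `(0, ε)`. The nodes and weights do not depend on
`A`, so the formula can be integrated when `A` varies. -/
theorem exists_det_interpolation {E : Type*} [NormedAddCommGroup E] [NormedSpace ℝ E]
    [FiniteDimensional ℝ E] {ε : ℝ} (hε : 0 < ε) :
    ∃ (s : Finset ℝ) (w : ℝ → ℝ), (∀ t ∈ s, 0 < t ∧ t < ε) ∧ ∑ t ∈ s, w t = 1 ∧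
      ∀ A : E →L[ℝ] E, (1 + A).det = ∑ t ∈ s, w t * (1 + t • A).det := by
  obtain ⟨s, hs, hcard⟩ :=
    (Set.Ioo_infinite hε).exists_subset_card_eq (Module.finrank ℝ E + 1)
  have hinj : Set.InjOn (id : ℝ → ℝ) s := Function.injective_id.injOn
  refine ⟨s, fun t => (Lagrange.basis s id t).eval 1, fun t ht => hs ht, ?_, fun A => ?_⟩
  · rw [← Polynomial.eval_finsetSum, Lagrange.sum_basis hinj (Finset.card_pos.1 (by omega)),
      Polynomial.eval_one]
  · let B := Module.finBasis ℝ E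
    let M := LinearMap.toMatrix B B (A : E →ₗ[ℝ] E)
    let p : Polynomial ℝ :=
      ((Polynomial.X : Polynomial ℝ) • M.map Polynomial.C
        + (1 : Matrix _ _ ℝ).map Polynomial.C).det
    have hp : ∀ t : ℝ, p.eval t = (1 + t • A).det := by
      intro t
      have h1 : (1 + t • A).det = (1 + t • M).det := by
        rw [ContinuousLinearMap.det, ← LinearMap.det_toMatrix B]
        congr 1
        simp [M, Module.End.one_eq_id]
      rw [h1, ← Polynomial.coe_evalRingHom, RingHom.map_det]
      congr 1
      ext i j
      by_cases hij : i = j <;> simp [hij] <;> ring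
    have hdeg : p.degree < s.card := by
      rw [hcard]
      refine (Polynomial.degree_le_of_natDegree_le
        (Polynomial.natDegree_det_X_add_C_le M 1)).trans_lt ?_
      rw [Fintype.card_fin]
      exact_mod_cast Nat.lt_succ_self _
    have := congrArg (Polynomial.eval 1) (Lagrange.eq_interpolate hinj hdeg)
    rw [hp, one_smul, Lagrange.interpolate_apply, Polynomial.eval_finsetSum] at this
    rw [this]
    refine Finset.sum_congr rfl fun t _ => ?_
    simp [hp, mul_comm]

/-- The determinant does not vanish along the segment from `1` to `1 + A`, since `1 + s A` is
injective for `s ∈ [0, 1]`. -/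
theorem det_one_add_pos {E : Type*} [NormedAddCommGroup E] [NormedSpace ℝ E]
    [FiniteDimensional ℝ E] (A : E →L[ℝ] E) (hA : ‖A‖ < 1) : 0 < (1 + A).det := by
  have hcont : Continuous fun s : ℝ => (1 + s • A).det :=
    ContinuousLinearMap.continuous_det.comp (by fun_prop)
  by_contra! hneg
  obtain ⟨s, hs, h0⟩ : (0 : ℝ) ∈ (fun s : ℝ => (1 + s • A).det) '' Set.Icc 0 1 := by
    refine intermediate_value_Icc' zero_le_one hcont.continuousOn ⟨by simpa using hneg, ?_⟩
    simp [ContinuousLinearMap.det]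
  have hs1 : ‖s • A‖ < 1 := by
    rw [norm_smul, Real.norm_of_nonneg hs.1]
    nlinarith [hs.2, norm_nonneg A]
  obtain ⟨v, hv, hv0⟩ := Submodule.exists_mem_ne_zero_of_ne_bot
    (LinearMap.bot_lt_ker_of_det_eq_zero (f := ((1 + s • A : E →L[ℝ] E) : E →ₗ[ℝ] E)) h0).ne'
  have h1 : v + (s • A) v = 0 := by simpa using hv
  have h2 : ‖v‖ = ‖(s • A) v‖ := by
    rw [← norm_neg ((s • A) v), ← eq_neg_of_add_eq_zero_left h1]
  have h3 := (s • A).le_opNorm v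
  have h4 : 0 < ‖v‖ := norm_pos_iff.2 hv0
  nlinarith


/-! ### Nonexistence of smooth retractions and zeros of vector fields -/

open MeasureTheory in
/-- There is no `C¹` retraction of a closed ball onto its boundary sphere. -/
theorem no_retraction {E : Type*} [NormedAddCommGroup E] [InnerProductSpace ℝ E]
    [FiniteDimensional ℝ E] {R : ℝ} (hR : 0 < R) (r : E → E)
    (hr : ∀ x ∈ Metric.closedBall (0 : E) R, ContDiffAt ℝ 1 r x)
    (hnorm : ∀ x ∈ Metric.closedBall (0 : E) R, ‖r x‖ = R)
    (hfix : ∀ x, ‖x‖ = R → r x = x) : False := by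
  borelize E
  let μ : Measure E := volume
  -- The displacement, cut off to zero outside the ball, is globally Lipschitz.
  let A : E → E →L[ℝ] E := fun x => fderiv ℝ r x - 1
  have hAcont : ContinuousOn A (Metric.closedBall 0 R) := fun x hx =>
    (((hr x hx).fderiv_right (m := 0) (by simp)).continuousAt.sub
      continuousAt_const).continuousWithinAt
  have hderiv : ∀ x ∈ Metric.closedBall (0 : E) R, HasFDerivAt (fun y => r y - y) (A x) x :=
    fun x hx => ((hr x hx).differentiableAt (by simp)).hasFDerivAt.sub (hasFDerivAt_id x)
  obtain ⟨C, hC⟩ := (isCompact_closedBall (0 : E) R).exists_bound_of_continuousOn hAcont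
  obtain ⟨K, hK0, hCK⟩ : ∃ K : ℝ, 0 < K ∧ C ≤ K := ⟨max C 1, by positivity, le_max_left _ _⟩
  have hAK : ∀ x ∈ Metric.closedBall (0 : E) R, ‖A x‖ ≤ K := fun x hx => (hC x hx).trans hCK
  have hlip : ∀ x ∈ Metric.closedBall (0 : E) R, ∀ y ∈ Metric.closedBall (0 : E) R,
      ‖(r y - y) - (r x - x)‖ ≤ K * ‖y - x‖ := fun x hx y hy =>
    (convex_closedBall (0 : E) R).norm_image_sub_le_of_norm_hasFDerivWithin_le
      (fun z hz => (hderiv z hz).hasFDerivWithinAt) hAK hx hy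
  classical
  let G : E → E := fun x => if ‖x‖ < R then r x - x else 0
  have hGball : ∀ x ∈ Metric.closedBall (0 : E) R, G x = r x - x := by
    intro x hx
    by_cases h : ‖x‖ < R
    · simp [G, h]
    · have : ‖x‖ = R := le_antisymm (by simpa using hx) (not_lt.1 h)
      simp [G, h, hfix x this]
  have hGout : ∀ x, R ≤ ‖x‖ → G x = 0 := fun x hx => by simp [G, not_lt.2 hx]
  have hcross : ∀ x y : E, ‖x‖ ≤ R → R ≤ ‖y‖ → ‖G y - G x‖ ≤ K * ‖y - x‖ := by
    intro x y hx hy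
    -- The segment from `x` to `y` meets the sphere, where `G` vanishes.
    obtain ⟨θ, hθ, hs⟩ : R ∈ (fun θ : ℝ => ‖x + θ • (y - x)‖) '' Set.Icc 0 1 :=
      intermediate_value_Icc zero_le_one (by fun_prop) ⟨by simpa using hx, by simpa using hy⟩
    have hs' : ‖x + θ • (y - x)‖ = R := hs
    have h1 := hlip x (by simpa using hx) (x + θ • (y - x)) (by simp [hs'])
    rw [← hGball x (by simpa using hx), ← hGball _ (by simp [hs']), hGout _ hs'.ge] at h1
    rw [hGout y hy]
    refine h1.trans ?_
    rw [add_sub_cancel_left, norm_smul, Real.norm_of_nonneg hθ.1]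
    have : θ * ‖y - x‖ ≤ ‖y - x‖ := mul_le_of_le_one_left (norm_nonneg _) hθ.2
    gcongr
  have hGlip : ∀ x y, ‖G y - G x‖ ≤ K * ‖y - x‖ := by
    intro x y
    rcases le_total ‖x‖ R with hx | hx <;> rcases le_total ‖y‖ R with hy | hy
    · rw [hGball x (by simpa using hx), hGball y (by simpa using hy)]
      exact hlip x (by simpa using hx) y (by simpa using hy)
    · exact hcross x y hx hy
    · rw [norm_sub_rev, norm_sub_rev y]
      exact hcross y x hy hx
    · simp only [hGout x hx, hGout y hy, sub_self, norm_zero]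
      positivity
  -- For small `t` the map `x ↦ x + t • G x` is a bijection fixing the complement of the ball
  -- pointwise, hence it maps the ball onto itself. Surjectivity is the contraction principle.
  have hinj : ∀ t, 0 < t → t < K⁻¹ → Function.Injective fun x => x + t • G x := by
    intro t ht0 ht x y hxy
    have hxy' : x + t • G x = y + t • G y := hxy
    have h1 : y - x = - (t • (G y - G x)) := by
      rw [smul_sub, neg_sub, sub_eq_sub_iff_add_eq_add, ← hxy', add_comm]
    have h2 : ‖y - x‖ ≤ t * K * ‖y - x‖ := by
      conv_lhs => rw [h1, norm_neg, norm_smul, Real.norm_of_nonneg ht0.le]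
      rw [mul_assoc]
      exact mul_le_mul_of_nonneg_left (hGlip x y) ht0.le
    have h3 : t * K < 1 := by rwa [← one_div, lt_div_iff₀ hK0] at ht
    have h4 : ‖y - x‖ = 0 := by nlinarith [norm_nonneg (y - x)]
    exact (sub_eq_zero.1 (norm_eq_zero.1 h4)).symm
  have hsurj : ∀ t, 0 < t → t < K⁻¹ → Function.Surjective fun x => x + t • G x := by
    intro t ht0 ht y
    have h3 : t * K < 1 := by rwa [← one_div, lt_div_iff₀ hK0] at ht
    have hc : ContractingWith (NNReal.mk (t * K) (by positivity)) fun x => y - t • G x := by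
      refine ⟨by exact_mod_cast h3, LipschitzWith.of_dist_le_mul fun x z => ?_⟩
      rw [dist_eq_norm, dist_eq_norm, sub_sub_sub_cancel_left, ← smul_sub, norm_smul,
        Real.norm_of_nonneg ht0.le, norm_sub_rev x z, NNReal.coe_mk, mul_assoc]
      exact mul_le_mul_of_nonneg_left (hGlip x z) ht0.le
    refine ⟨hc.fixedPoint, ?_⟩
    have := hc.fixedPoint_isFixedPt
    have h5 : y - t • G hc.fixedPoint = hc.fixedPoint := this
    exact (sub_eq_iff_eq_add.1 h5).symm
  have himage : ∀ t, 0 < t → t < K⁻¹ →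
      (fun x => x + t • G x) '' Metric.ball 0 R = Metric.ball 0 R := by
    intro t ht0 ht
    have hcompl : (fun x => x + t • G x) '' (Metric.ball 0 R)ᶜ = (Metric.ball 0 R)ᶜ := by
      refine (Set.image_congr fun x hx => ?_).trans (Set.image_id _)
      simp [hGout x (by simpa using hx)]
    rw [← compl_inj_iff, ← Set.image_compl_eq ⟨hinj t ht0 ht, hsurj t ht0 ht⟩, hcompl]
  -- Hence the Jacobian integral equals the volume of the ball for small `t`.
  have hvol : ∀ t, 0 < t → t < K⁻¹ →
      ∫ x in Metric.ball 0 R, (1 + t • A x).det ∂μ = μ.real (Metric.ball 0 R) := by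
    intro t ht0 ht
    have h3 : t * K < 1 := by rwa [← one_div, lt_div_iff₀ hK0] at ht
    have hd : ∀ x ∈ Metric.ball (0 : E) R, HasFDerivWithinAt (fun x => x + t • G x)
        (1 + t • A x) (Metric.ball 0 R) x := by
      intro x hx
      have h6 : HasFDerivAt (fun x => x + t • (r x - x)) (1 + t • A x) x :=
        (hasFDerivAt_id x).add ((hderiv x (Metric.ball_subset_closedBall hx)).const_smul t)
      refine h6.hasFDerivWithinAt.congr (fun z hz => ?_) ?_
      · rw [hGball z (Metric.ball_subset_closedBall hz)]
      · rw [hGball x (Metric.ball_subset_closedBall hx)]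
    have h7 := integral_image_eq_integral_abs_det_fderiv_smul μ measurableSet_ball hd
      (hinj t ht0 ht).injOn (fun _ => (1 : ℝ))
    rw [himage t ht0 ht, setIntegral_const] at h7
    rw [smul_eq_mul, mul_one] at h7
    rw [h7]
    refine setIntegral_congr_fun measurableSet_ball fun x hx => ?_
    have h8 : 0 < (1 + t • A x).det := by
      refine det_one_add_pos _ ?_
      rw [norm_smul, Real.norm_of_nonneg ht0.le]
      refine lt_of_le_of_lt ?_ h3
      exact mul_le_mul_of_nonneg_left (hAK x (Metric.ball_subset_closedBall hx)) ht0.le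
    simp [abs_of_pos h8]
  -- The Jacobian of `r` itself vanishes, because `‖r‖` is constant.
  have hdet0 : ∀ x ∈ Metric.ball (0 : E) R, (1 + A x).det = 0 := by
    intro x hx
    have hx' := Metric.ball_subset_closedBall hx
    have h9 : HasFDerivAt r (1 + A x) x := by
      simpa [A] using ((hr x hx').differentiableAt (by simp)).hasFDerivAt
    have h10 := h9.norm_sq
    have h11 : HasFDerivAt (fun x => ‖r x‖ ^ 2) (0 : E →L[ℝ] ℝ) x := by
      refine (hasFDerivAt_const (R ^ 2) x).congr_of_eventuallyEq ?_
      filter_upwards [Metric.isOpen_ball.mem_nhds hx] with z hz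
      rw [hnorm z (Metric.ball_subset_closedBall hz)]
    have h12 := h10.unique h11
    by_contra hne
    have hsur : Function.Surjective ((1 + A x : E →L[ℝ] E) : E →ₗ[ℝ] E) :=
      (LinearMap.equivOfDetNeZero _ hne).surjective
    obtain ⟨v, hv⟩ := hsur (r x)
    have hv' : (1 + A x) v = r x := hv
    have h13 := DFunLike.congr_fun h12 v
    simp only [smul_apply, ContinuousLinearMap.comp_apply, hv',
      innerSL_apply_apply, real_inner_self_eq_norm_sq, hnorm x hx', zero_apply] at h13
    simp at h13
    exact hR.ne' h13
  obtain ⟨s, w, hs, hw, hdet⟩ := exists_det_interpolation (E := E) (inv_pos.2 hK0)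
  have hint : ∀ t : ℝ, IntegrableOn (fun x => (1 + t • A x).det) (Metric.ball 0 R) μ := by
    intro t
    refine IntegrableOn.mono_set ?_ Metric.ball_subset_closedBall
    refine ContinuousOn.integrableOn_compact (isCompact_closedBall 0 R) ?_
    exact ContinuousLinearMap.continuous_det.comp_continuousOn
      (continuousOn_const.add (hAcont.const_smul t))
  have hzero : ∫ x in Metric.ball 0 R, (1 + A x).det ∂μ = 0 :=
    setIntegral_eq_zero_of_forall_eq_zero hdet0
  rw [integral_congr_ae (Eventually.of_forall fun x => hdet (A x)),
    integral_finsetSum _ fun t _ => (hint t).const_mul _] at hzero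
  have hone : ∀ t ∈ s, ∫ x in Metric.ball 0 R, w t * (1 + t • A x).det ∂μ
      = w t * μ.real (Metric.ball 0 R) := fun t ht => by
    rw [integral_const_mul, hvol t (hs t ht).1 (hs t ht).2]
  rw [Finset.sum_congr rfl hone, ← Finset.sum_mul, hw, one_mul] at hzero
  exact (Metric.measure_ball_pos μ 0 hR).ne'
    ((measureReal_eq_zero_iff measure_ball_lt_top.ne).1 hzero)

/-- A `C¹` vector field pointing outward on a sphere has a zero: otherwise, moving `x` along the
direction `P x` until the sphere is hit defines a `C¹` retraction of the ball onto the sphere. -/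
theorem exists_zero_of_inner_pos {E : Type*} [NormedAddCommGroup E] [InnerProductSpace ℝ E]
    [FiniteDimensional ℝ E] {R : ℝ} (hR : 0 < R) (P : E → E) (hP : ContDiff ℝ 1 P)
    (hpos : ∀ x, ‖x‖ = R → 0 < inner ℝ x (P x)) : ∃ x, P x = 0 := by
  by_contra! hne
  -- `D x` is a quarter of the discriminant of the quadratic equation `‖x + τ • P x‖ ^ 2 = R ^ 2`
  -- in `τ`; it is positive on the closed ball, so the larger root `τ x` depends smoothly on `x`.
  let D : E → ℝ := fun x => inner ℝ x (P x) ^ 2 + ‖P x‖ ^ 2 * (R ^ 2 - ‖x‖ ^ 2)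
  have hPpos : ∀ x, 0 < ‖P x‖ ^ 2 := fun x => by
    have := norm_pos_iff.2 (hne x)
    positivity
  have hD : ∀ x ∈ Metric.closedBall (0 : E) R, 0 < D x := by
    intro x hx
    rcases (show ‖x‖ ≤ R by simpa using hx).eq_or_lt with h | h
    · have := hpos x h
      simp only [D, h, sub_self, mul_zero, add_zero]
      positivity
    · have h1 : 0 < R ^ 2 - ‖x‖ ^ 2 := by nlinarith [norm_nonneg x]
      have := mul_pos (hPpos x) h1
      simp only [D]
      positivity
  have hDdiff : ContDiff ℝ 1 D :=
    ((contDiff_id.inner ℝ hP).pow 2).add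
      ((hP.norm_sq ℝ).mul (contDiff_const.sub (contDiff_id.norm_sq ℝ)))
  let τ : E → ℝ := fun x => (-inner ℝ x (P x) + √(D x)) / ‖P x‖ ^ 2
  refine no_retraction hR (fun x => x + τ x • P x) (fun x hx => ?_) (fun x hx => ?_)
    (fun x hx => ?_)
  · refine contDiffAt_id.add (ContDiffAt.smul ?_ hP.contDiffAt)
    exact (((contDiff_id.inner ℝ hP).contDiffAt.neg).add
      (hDdiff.contDiffAt.sqrt (hD x hx).ne')).div (hP.norm_sq ℝ).contDiffAt (hPpos x).ne'
  · have h1 : τ x * ‖P x‖ ^ 2 = -inner ℝ x (P x) + √(D x) :=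
      div_mul_cancel₀ _ (hPpos x).ne'
    have h2 : √(D x) ^ 2 = D x := Real.sq_sqrt (hD x hx).le
    have h3 : ‖x + τ x • P x‖ ^ 2 = R ^ 2 := by
      rw [norm_add_sq_real, inner_smul_right, norm_smul, mul_pow, Real.norm_eq_abs, sq_abs]
      have h4 : √(D x) = τ x * ‖P x‖ ^ 2 + inner ℝ x (P x) := by linarith
      rw [h4] at h2
      simp only [D] at h2
      refine mul_left_cancel₀ (hPpos x).ne' ?_
      linear_combination h2
    exact (sq_eq_sq₀ (norm_nonneg _) hR.le).1 h3
  · have h1 : √(D x) = inner ℝ x (P x) := by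
      simp only [D, hx, sub_self, mul_zero, add_zero]
      exact Real.sqrt_sq (hpos x hx).le
    simp [τ, h1]

/-! ### Galerkin approximation -/

/-- Solvability of the nonlinear equation tested against a finite-dimensional subspace. -/
theorem exists_galerkin {X : Type*} [NormedAddCommGroup X] [NormedSpace ℝ X]
    (a : X →L[ℝ] X →L[ℝ] ℝ) (c : X →L[ℝ] X →L[ℝ] X →L[ℝ] ℝ) (F : X →L[ℝ] ℝ)
    {ca : ℝ} (hca : 0 < ca) (V : Submodule ℝ X) [FiniteDimensional ℝ V]
    (hcoer : ∀ z ∈ V, ca * ‖z‖ ^ 2 ≤ a z z) (hskew : ∀ z ∈ V, c z z z = 0) :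
    ∃ z ∈ V, ∀ v ∈ V, a z v + c z z v = F v := by
  let E := EuclideanSpace ℝ (Fin (Module.finrank ℝ V))
  let L : E ≃L[ℝ] V := ContinuousLinearEquiv.ofFinrankEq (by simp [E])
  let ι : E →L[ℝ] X := V.subtypeL ∘L (L : E →L[ℝ] V)
  let e := EuclideanSpace.basisFun (Fin (Module.finrank ℝ V)) ℝ
  have hι : ∀ ξ, ι ξ ∈ V := fun ξ => (L ξ).2
  let ℓ : E → X →L[ℝ] ℝ := fun ξ => a (ι ξ) + c (ι ξ) (ι ξ) - F
  let P : E → E := fun ξ => ∑ i, ℓ ξ (ι (e i)) • e i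
  have hP : ContDiff ℝ 1 P := by
    refine ContDiff.sum fun i _ => ?_
    refine ContDiff.smul (f := fun ξ => ℓ ξ (ι (e i))) (g := fun _ => e i) ?_ contDiff_const
    refine ContDiff.clm_apply ?_ contDiff_const
    have h1 : ContDiff ℝ 1 fun ξ : E => c (ι ξ) (ι ξ) :=
      (c.contDiff.comp ι.contDiff).clm_apply ι.contDiff
    exact ((a.contDiff.comp ι.contDiff).add h1).sub contDiff_const
  have hinner : ∀ ξ η, inner ℝ η (P ξ) = ℓ ξ (ι η) := by
    intro ξ η
    have h1 : ι η = ∑ i, inner ℝ (e i) η • ι (e i) := by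
      conv_lhs => rw [← e.sum_repr' η]
      simp only [map_sum, map_smul]
    rw [h1, map_sum]
    refine (inner_sum (𝕜 := ℝ) Finset.univ _ η).trans (Finset.sum_congr rfl fun i _ => ?_)
    rw [inner_smul_right, map_smul, smul_eq_mul, real_inner_comm, mul_comm]
  have hbound : ∀ ξ, ‖ξ‖ ≤ ‖(L.symm : V →L[ℝ] E)‖ * ‖ι ξ‖ := fun ξ => by
    simpa [ι] using (L.symm : V →L[ℝ] E).le_opNorm (L ξ)
  -- On the sphere of the radius chosen below, `‖ι ξ‖` exceeds `‖F‖ / ca`, so the coercive term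
  -- dominates `F`.
  have hM : 0 ≤ ‖F‖ / ca := by positivity
  obtain ⟨ξ, hξ⟩ := exists_zero_of_inner_pos
    (R := (‖(L.symm : V →L[ℝ] E)‖ + 1) * (‖F‖ / ca + 1)) (by positivity) P hP (by
      intro ξ hξ
      have h1 : ‖F‖ / ca < ‖ι ξ‖ := by
        by_contra! h
        have := hbound ξ
        nlinarith [norm_nonneg (L.symm : V →L[ℝ] E)]
      rw [div_lt_iff₀ hca] at h1
      have h2 := hcoer _ (hι ξ)
      have h3 := (le_abs_self _).trans (F.le_opNorm (ι ξ))
      have h4 := hskew _ (hι ξ)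
      have h5 : 0 < ‖ι ξ‖ := by
        by_contra! h
        nlinarith [norm_nonneg F]
      have h6 : ℓ ξ (ι ξ) = a (ι ξ) (ι ξ) + c (ι ξ) (ι ξ) (ι ξ) - F (ι ξ) := rfl
      rw [hinner, h6, h4]
      nlinarith)
  refine ⟨ι ξ, hι ξ, fun v hv => ?_⟩
  have h1 := hinner ξ (L.symm ⟨v, hv⟩)
  have h2 : ι (L.symm ⟨v, hv⟩) = v := by simp [ι]
  rw [hξ, inner_zero_right, h2] at h1
  have h3 : ℓ ξ v = a (ι ξ) v + c (ι ξ) (ι ξ) v - F v := rfl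
  linarith

/-! ### Weak compactness and the closed range theorem -/

/-- Bounded sequences in a separable reflexive space have weakly convergent subsequences. The
closed ball of the bidual is weak-* compact, and it is metrizable because the norming functionals
of a dense sequence separate the points of `X`. -/
theorem exists_weakly_convergent_subseq {X : Type*} [NormedAddCommGroup X] [NormedSpace ℝ X]
    [TopologicalSpace.SeparableSpace X]
    (hrefl : Function.Surjective (NormedSpace.inclusionInDoubleDual ℝ X))
    (u : ℕ → X) (r : ℝ) (hu : ∀ n, ‖u n‖ ≤ r) :
    ∃ (z : X) (φ : ℕ → ℕ), ‖z‖ ≤ r ∧ StrictMono φ ∧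
      ∀ f : X →L[ℝ] ℝ, Tendsto (fun n => f (u (φ n))) atTop (nhds (f z)) := by
  have hJ : ∀ x : X, ‖NormedSpace.inclusionInDoubleDual ℝ X x‖ = ‖x‖ :=
    (NormedSpace.inclusionInDoubleDualLi ℝ (E := X)).norm_map
  let K : Set (WeakDual ℝ (StrongDual ℝ X)) :=
    WeakDual.toStrongDual ⁻¹' Metric.closedBall 0 r
  have hKmem : ∀ ψ, ψ ∈ K ↔ ‖WeakDual.toStrongDual ψ‖ ≤ r := fun ψ =>
    mem_closedBall_zero_iff (E := StrongDual ℝ (StrongDual ℝ X)) (a := WeakDual.toStrongDual ψ)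
  have hK : IsCompact K := WeakDual.isCompact_closedBall 0 r
  have : CompactSpace K := isCompact_iff_compactSpace.1 hK
  choose f hf1 hf using fun k => exists_dual_vector'' ℝ (TopologicalSpace.denseSeq X k)
  have : TopologicalSpace.MetrizableSpace K := by
    refine Metric.PiNatEmbed.TopologicalSpace.MetrizableSpace.of_countable_separating
      (fun n (k : K) => (k : WeakDual ℝ (StrongDual ℝ X)) (f n))
      (fun n => (WeakDual.eval_continuous _).comp continuous_subtype_val) fun x y hxy => ?_
    by_contra! h
    obtain ⟨w, hw⟩ := hrefl (WeakDual.toStrongDual (x - y : WeakDual ℝ (StrongDual ℝ X)))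
    have hfw : ∀ n, f n w = 0 := fun n => by
      rw [← NormedSpace.dual_def ℝ, hw]
      exact sub_eq_zero.2 (h n)
    have hw0 : w ≠ 0 := by
      rintro rfl
      rw [map_zero] at hw
      exact hxy (Subtype.ext (sub_eq_zero.1
        (WeakDual.toStrongDual.injective (hw.symm.trans (map_zero _).symm))))
    obtain ⟨k, hk⟩ := (TopologicalSpace.denseRange_denseSeq X).exists_dist_lt w
      (half_pos (norm_pos_iff.2 hw0))
    rw [dist_eq_norm] at hk
    set d := TopologicalSpace.denseSeq X k
    have h1 : ‖d‖ ≤ ‖w - d‖ := by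
      have h2 : f k (d - w) = ‖d‖ := by rw [map_sub, hfw, sub_zero]; exact hf k
      have h3 := (le_abs_self _).trans ((f k).le_opNorm (d - w))
      rw [h2, norm_sub_rev] at h3
      exact h3.trans (mul_le_of_le_one_left (norm_nonneg _) (hf1 k))
    have h4 : ‖w‖ ≤ ‖w - d‖ + ‖d‖ := by simpa using norm_add_le (w - d) d
    linarith
  let U : ℕ → K := fun n =>
    ⟨StrongDual.toWeakDual (NormedSpace.inclusionInDoubleDual ℝ X (u n)), by
      exact (hKmem _).2 ((hJ (u n)).trans_le (hu n))⟩
  obtain ⟨k, φ, hφ, hlim⟩ := CompactSpace.tendsto_subseq U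
  obtain ⟨z, hz⟩ := hrefl (WeakDual.toStrongDual (k : WeakDual ℝ (StrongDual ℝ X)))
  refine ⟨z, φ, ?_, hφ, fun g => ?_⟩
  · rw [← hJ, hz]
    exact (hKmem _).1 k.2
  · have h1 := (((WeakDual.eval_continuous g).comp continuous_subtype_val).tendsto k).comp hlim
    have h2 : g z = (k : WeakDual ℝ (StrongDual ℝ X)) g := by
      rw [← NormedSpace.dual_def ℝ, hz]; rfl
    rw [h2]
    exact h1

/-- Under the inf-sup condition, every functional vanishing on the kernel of `b` is of the form
`b S`. -/
theorem exists_eq_of_vanish_on_kernel {X 𝕊 : Type*} [NormedAddCommGroup X] [NormedSpace ℝ X]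
    [NormedAddCommGroup 𝕊] [NormedSpace ℝ 𝕊] [CompleteSpace 𝕊]
    (hreflX : Function.Surjective (NormedSpace.inclusionInDoubleDual ℝ X))
    (b : 𝕊 →L[ℝ] X →L[ℝ] ℝ) {cb : ℝ} (hcb : 0 < cb)
    (hinfsup : ∀ S : 𝕊, cb * ‖S‖ ≤ ‖b S‖) (l : X →L[ℝ] ℝ)
    (hl : ∀ x, (∀ T, b T x = 0) → l x = 0) : ∃ S, b S = l := by
  have hclosed : IsClosed (Set.range b) := by
    refine AntilipschitzWith.isClosed_range (K := (NNReal.mk cb hcb.le)⁻¹)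
      (AddMonoidHomClass.antilipschitz_of_bound b fun S => ?_) b.uniformContinuous
    rw [NNReal.coe_inv, NNReal.coe_mk, ← div_eq_inv_mul, le_div_iff₀ hcb, mul_comm]
    exact hinfsup S
  by_contra hS
  have hconv : Convex ℝ (Set.range b) := by
    exact (LinearMap.range (b : 𝕊 →ₗ[ℝ] X →L[ℝ] ℝ)).convex
  obtain ⟨Φ, s, hΦ, hs⟩ := geometric_hahn_banach_closed_point hconv hclosed
    (x := l) (fun ⟨S, h⟩ => hS ⟨S, h⟩)
  have hs0 : 0 < s := by simpa using hΦ (b 0) ⟨0, rfl⟩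
  obtain ⟨x, rfl⟩ := hreflX Φ
  simp only [NormedSpace.dual_def] at hΦ hs
  have hx : l x = 0 := by
    refine hl x fun T => ?_
    by_contra hT
    -- A functional bounded above on a subspace vanishes there: rescale `T` to attain `s`.
    have := hΦ (b ((s / b T x) • T)) ⟨_, rfl⟩
    simp [hT] at this
  linarith

/-! ### Existence for the mixed problem -/

/-- Abstract existence theorem for the dual–mixed Navier–Stokes problem: `X`, `𝕊`
separable reflexive Banach spaces, `a`, `b` continuous bilinear forms, `Z` the kernel of
`b`, `c` a continuous trilinear form with `c(z,z,z) = 0` on `Z` and `z ↦ c(z,z,·)` weakly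
continuous, `a` coercive on `Z` and `b` satisfying the inf-sup condition.  Then for every
`F ∈ X'` there are `z ∈ Z`, `S ∈ 𝕊` with `a(z,x) + c(z,z,x) - b(S,x) = F(x)` for all `x`
and `‖z‖ ≤ ‖F‖/c_a`. -/
theorem stmt_13 {X 𝕊 : Type*}
    [NormedAddCommGroup X] [NormedSpace ℝ X] [CompleteSpace X]
    [NormedAddCommGroup 𝕊] [NormedSpace ℝ 𝕊] [CompleteSpace 𝕊]
    [TopologicalSpace.SeparableSpace X] [TopologicalSpace.SeparableSpace 𝕊]
    (hreflX : Function.Surjective (NormedSpace.inclusionInDoubleDual ℝ X))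
    (hrefl𝕊 : Function.Surjective (NormedSpace.inclusionInDoubleDual ℝ 𝕊))
    (a : X →L[ℝ] X →L[ℝ] ℝ) (b : 𝕊 →L[ℝ] X →L[ℝ] ℝ)
    (c : X →L[ℝ] X →L[ℝ] X →L[ℝ] ℝ)
    (Z : Set X) (hZ : Z = {x : X | ∀ T : 𝕊, b T x = 0})
    (ca cb : ℝ) (hca : 0 < ca) (hcb : 0 < cb)
    (hcoer : ∀ z ∈ Z, ca * ‖z‖^2 ≤ a z z)
    (hinfsup : ∀ S : 𝕊, cb * ‖S‖ ≤ ‖b S‖)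
    (hskew : ∀ z ∈ Z, c z z z = 0)
    (hweak : ∀ (zn : ℕ → X) (z : X), (∀ n, zn n ∈ Z) → z ∈ Z →
      (∀ f : X →L[ℝ] ℝ, Tendsto (fun n => f (zn n)) atTop (nhds (f z))) →
      ∀ x : X, Tendsto (fun n => c (zn n) (zn n) x) atTop (nhds (c z z x))) :
    ∀ F : X →L[ℝ] ℝ, ∃ (z : X) (S : 𝕊), z ∈ Z ∧
      (∀ x : X, a z x + c z z x - b S x = F x) ∧ ‖z‖ ≤ ‖F‖ / ca := by
  intro F
  let W : Submodule ℝ X := ⨅ T, LinearMap.ker (b T : X →ₗ[ℝ] ℝ)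
  have hW : ∀ x, x ∈ W ↔ x ∈ Z := fun x => by simp [W, hZ]
  -- Exhaust the kernel by finite-dimensional subspaces with dense union.
  let d : ℕ → W := TopologicalSpace.denseSeq W
  let V : ℕ → Submodule ℝ X := fun n =>
    Submodule.span ℝ ((fun k => (d k : X)) '' Set.Iic n)
  have hVW : ∀ n, V n ≤ W := fun n => by
    refine Submodule.span_le.2 ?_
    rintro _ ⟨k, -, rfl⟩
    exact (d k).2
  have hVfin : ∀ n, FiniteDimensional ℝ (V n) := fun n =>
    FiniteDimensional.span_of_finite ℝ ((Set.finite_Iic n).image _)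
  have hVZ : ∀ n, ∀ z ∈ V n, z ∈ Z := fun n z hz => (hW z).1 (hVW n hz)
  choose u huV hu using fun n => exists_galerkin a c F hca (V n)
    (fun z hz => hcoer z (hVZ n z hz)) (fun z hz => hskew z (hVZ n z hz))
  have huZ : ∀ n, u n ∈ Z := fun n => hVZ n _ (huV n)
  have hub : ∀ n, ‖u n‖ ≤ ‖F‖ / ca := by
    intro n
    have h1 := hu n _ (huV n)
    rw [hskew _ (huZ n), add_zero] at h1
    have h2 := hcoer _ (huZ n)
    have h3 := (le_abs_self _).trans (F.le_opNorm (u n))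
    rw [le_div_iff₀ hca]
    rcases (norm_nonneg (u n)).eq_or_lt with h | h
    · rw [← h, zero_mul]; exact norm_nonneg F
    · refine le_of_mul_le_mul_right ?_ h
      nlinarith
  obtain ⟨z, φ, hzb, hφ, hlim⟩ := exists_weakly_convergent_subseq hreflX u _ hub
  have hzZ : z ∈ Z := by
    rw [hZ]
    intro T
    refine tendsto_nhds_unique (hlim (b T)) ?_
    have h : ∀ n, b T (u (φ n)) = 0 := fun n => by
      have := huZ (φ n)
      rw [hZ] at this
      exact this T
    simp [h]
  -- The residual vanishes on the kernel of `b`: each dense vector `d k` lies in `V (φ n)` for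
  -- `n ≥ k`, so the Galerkin equations tested with it pass to the weak limit.
  let l : X →L[ℝ] ℝ := a z + c z z - F
  have hd : ∀ k, l (d k) = 0 := by
    intro k
    have h1 : Tendsto (fun n => a (u (φ n)) (d k) + c (u (φ n)) (u (φ n)) (d k)) atTop
        (nhds (a z (d k) + c z z (d k))) :=
      (hlim (a.flip (d k))).add
        (hweak (fun n => u (φ n)) z (fun n => huZ _) hzZ hlim (d k))
    have h2 : Tendsto (fun n => a (u (φ n)) (d k) + c (u (φ n)) (u (φ n)) (d k)) atTop
        (nhds (F (d k))) := by
      refine tendsto_const_nhds.congr' ?_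
      filter_upwards [eventually_ge_atTop k] with n hn
      refine (hu (φ n) _ (Submodule.subset_span ⟨k, ?_, rfl⟩)).symm
      exact hn.trans (hφ.id_le n)
    exact sub_eq_zero.2 (tendsto_nhds_unique h1 h2)
  have hlW : ∀ x : W, l x = 0 := fun x =>
    congrFun ((TopologicalSpace.denseRange_denseSeq W).equalizer
      (g := fun x : W => l x) (h := fun _ => (0 : ℝ)) (by fun_prop) continuous_const
      (funext hd)) x
  obtain ⟨S, hS⟩ := exists_eq_of_vanish_on_kernel hreflX b hcb hinfsup l fun x hx =>
    hlW ⟨x, (hW x).2 (by rw [hZ]; exact hx)⟩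
  refine ⟨z, S, hzZ, fun x => ?_, hzb⟩
  have h : b S x = a z x + c z z x - F x := by rw [hS]; rfl
  linarith
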